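/- arXiv:2412.13929 — 4 statements merged into one kernel-verified Lean document; each statement's English description precedes it below -/
import Mathlib

section
/- Let τ > 0, ξ ∈ ℝ, and let N : [0,τ] → ℝ be integrable, and define Δ : ℂ → ℂ by Δ(s) = 1 − ξ e^{−sτ} − ∫₀^τ N(ν) e^{−sν} dν. If Δ(0) = 1 − ξ − ∫₀^τ N(ν) dν ≤ 0, then Δ has a real root s ≥ 0, i.e., there exists s ∈ [0,∞) with Δ(s) = 0. -/
/-!
For real `s`, `Δ s` is the real number `1 - ξ e^{-sτ} - ∫₀^τ N(ν) e^{-sν} dν`. For `s ≥ 0` the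
integrand is dominated by `|N|`, so dominated convergence (`tendsto_laplace`) gives both continuity
on `[0, ∞)` and the limit `1` at `+∞`. As the value at `0` is nonpositive, the
intermediate value theorem yields a root.
-/

open MeasureTheory Complex

open Filter Topology in
/-- Dominated convergence with bound `|N|`, for a parameter `s` that is eventually nonnegative
along `l`. It serves both for continuity and for the limit at infinity. -/
lemma tendsto_laplace {τ : ℝ} (hτ : 0 < τ) {N : ℝ → ℝ} (hN : IntervalIntegrable N volume 0 τ)
    {l : Filter ℝ} [l.IsCountablyGenerated] (hl : ∀ᶠ s in l, 0 ≤ s) {g : ℝ → ℝ}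
    (hg : ∀ ν, 0 < ν → Tendsto (fun s : ℝ => Real.exp (-s * ν)) l (𝓝 (g ν))) :
    Tendsto (fun s : ℝ => ∫ ν in (0:ℝ)..τ, N ν * Real.exp (-s * ν)) l
      (𝓝 (∫ ν in (0:ℝ)..τ, N ν * g ν)) := by
  refine intervalIntegral.tendsto_integral_filter_of_dominated_convergence (fun ν => ‖N ν‖)
    (Eventually.of_forall fun s => ?_) ?_ hN.norm (Eventually.of_forall fun ν hν => ?_)
  · exact hN.def'.aestronglyMeasurable.mul (by fun_prop : Continuous fun ν : ℝ =>
      Real.exp (-s * ν)).aestronglyMeasurable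
  · filter_upwards [hl] with s hs
    refine Eventually.of_forall fun ν hν => ?_
    rw [Set.uIoc_of_le hτ.le] at hν
    rw [norm_mul, Real.norm_eq_abs (Real.exp _), Real.abs_exp]
    refine mul_le_of_le_one_right (norm_nonneg _) (Real.exp_le_one_iff.2 ?_)
    nlinarith [mul_nonneg hs hν.1.le]
  · rw [Set.uIoc_of_le hτ.le] at hν
    exact (hg ν hν.1).const_mul _

open Filter Topology in
theorem stmt_0 (τ ξ : ℝ) (hτ : 0 < τ) (N : ℝ → ℝ)
    (hN : IntervalIntegrable N volume 0 τ)
    (Δ : ℂ → ℂ)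
    (hΔ : ∀ s : ℂ, Δ s = 1 - (ξ : ℂ) * Complex.exp (-s * τ)
      - ∫ ν in (0:ℝ)..τ, (N ν : ℂ) * Complex.exp (-s * ν))
    (h0 : 1 - ξ - ∫ ν in (0:ℝ)..τ, N ν ≤ 0) :
    ∃ s : ℝ, 0 ≤ s ∧ Δ s = 0 := by
  set f : ℝ → ℝ := fun s => 1 - ξ * Real.exp (-s * τ)
    - ∫ ν in (0:ℝ)..τ, N ν * Real.exp (-s * ν) with hf
  have hfΔ : ∀ s : ℝ, Δ s = (f s : ℂ) := by
    intro s
    rw [hΔ, hf]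
    push_cast [← intervalIntegral.integral_ofReal]
    rfl
  have hcont : ContinuousOn f (Set.Ici 0) := by
    intro x hx
    refine ContinuousWithinAt.sub (by fun_prop) ?_
    refine tendsto_laplace hτ hN self_mem_nhdsWithin fun ν _ => ?_
    exact (by fun_prop : Continuous fun s : ℝ => Real.exp (-s * ν)).continuousWithinAt
  have hexp : ∀ ν : ℝ, 0 < ν → Tendsto (fun s : ℝ => Real.exp (-s * ν)) atTop (𝓝 0) :=
    fun ν hν => Real.tendsto_exp_atBot.comp (tendsto_neg_atTop_atBot.atBot_mul_const hν)
  have hlim : Tendsto f atTop (𝓝 1) := by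
    have h := (((hexp τ hτ).const_mul ξ).const_sub 1).sub
      (tendsto_laplace hτ hN (eventually_ge_atTop 0) (g := fun _ => 0) hexp)
    simpa [hf] using h
  have hf0 : f 0 ≤ 0 := by simpa [hf] using h0
  obtain ⟨s, hs, hfs⟩ := isPreconnected_Ici.intermediate_value_Ico (Set.mem_Ici.2 le_rfl)
    (le_principal_iff.2 (Ici_mem_atTop (0:ℝ))) hcont hlim ⟨hf0, one_pos⟩
  exact ⟨s, hs, by rw [hfΔ, hfs, ofReal_zero]⟩
end

section
/- Let τ > 0, ξ ∈ ℝ, and let N : [0,τ] → ℝ be integrable, and define Δ(s) = 1 − ξ e^{−sτ} − ∫₀^τ N(ν) e^{−sν} dν. If Δ(0) = 1 − ξ − ∫₀^τ N(ν) dν ≤ 0, then the integral difference equation z(t) = ξ z(t−τ) + ∫₀^τ N(ν) z(t−ν) dν is not exponentially stable in the L² norm. -/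
/-!
On the real axis `F(σ) = 1 - ξ e^{-στ} - ∫₀^τ N(ν) e^{-σν} dν` is real, continuous on `[0, ∞)` and
tends to `1` as `σ → ∞`, both by dominated convergence with the bound `|N|`. Since `F(0) ≤ 0`, the
intermediate value theorem gives a zero `σ ≥ 0` of `F`. Then `z(t) = e^{σt}` is a smooth solution of
the equation whose `L²` norm over the sliding window is multiplied by `e^{σt} ≥ 1` after time `t`,
so no bound `C e^{-ηt}` with `η > 0` can hold.
-/

open MeasureTheory Complex

/-- `z : ℝ → ℝ` (whose values matter on `[-τ, ∞)`) is a solution of the integral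
difference equation `z(t) = ξ z(t-τ) + ∫₀^τ N(ν) z(t-ν) dν` with initial condition
of class `H¹([-τ,0])` satisfying the compatibility condition. -/
def IsSolutionIDE (τ ξ : ℝ) (N : ℝ → ℝ) (z : ℝ → ℝ) : Prop :=
  -- locally square integrable on `[-τ, ∞)`
  (∀ T : ℝ, IntervalIntegrable (fun t => (z t) ^ 2) volume (-τ) T) ∧
  -- the initial condition `z⁰ = z|_{[-τ,0]}` belongs to `H¹([-τ,0])`
  (∃ g : ℝ → ℝ, IntervalIntegrable (fun t => (g t) ^ 2) volume (-τ) 0 ∧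
    ∀ θ ∈ Set.Icc (-τ) (0:ℝ), z θ = z (-τ) + ∫ s in (-τ)..θ, g s) ∧
  -- compatibility condition
  (z 0 = ξ * z (-τ) + ∫ ν in (0:ℝ)..τ, N ν * z (-ν)) ∧
  -- the integral difference equation holds for all `t ≥ 0`
  (∀ t : ℝ, 0 ≤ t → z t = ξ * z (t - τ) + ∫ ν in (0:ℝ)..τ, N ν * z (t - ν))

/-- Exponential stability in the `L²` norm of the integral difference equation:
there exist `C ≥ 0` and `η > 0` such that every solution satisfies
`‖z_{[t]}‖_{L²(-τ,0)} ≤ C e^{-η t} ‖z_{[0]}‖_{L²(-τ,0)}` for all `t ≥ 0`. -/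
def ExpStableIDE (τ ξ : ℝ) (N : ℝ → ℝ) : Prop :=
  ∃ C : ℝ, 0 ≤ C ∧ ∃ η : ℝ, 0 < η ∧ ∀ z : ℝ → ℝ, IsSolutionIDE τ ξ N z →
    ∀ t : ℝ, 0 ≤ t →
      Real.sqrt (∫ θ in (-τ)..0, (z (t + θ)) ^ 2) ≤
        C * Real.exp (-η * t) * Real.sqrt (∫ θ in (-τ)..0, (z θ) ^ 2)

/-- The characteristic function has a nonnegative real zero `σ`. -/
lemma exists_nonneg_real_root (τ ξ : ℝ) (hτ : 0 < τ) (N : ℝ → ℝ)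
    (hN : IntervalIntegrable N volume 0 τ)
    (h0 : 1 - ξ - ∫ ν in (0:ℝ)..τ, N ν ≤ 0) :
    ∃ σ : ℝ, 0 ≤ σ ∧
      1 - ξ * Real.exp (-σ * τ) - ∫ ν in (0:ℝ)..τ, N ν * Real.exp (-σ * ν) = 0 := by
  set F : ℝ → ℝ := fun σ =>
    1 - ξ * Real.exp (-σ * τ) - ∫ ν in (0:ℝ)..τ, N ν * Real.exp (-σ * ν) with hF
  have hmeas : ∀ σ : ℝ, AEStronglyMeasurable (fun ν => N ν * Real.exp (-σ * ν))
      (volume.restrict (Set.uIoc 0 τ)) := fun σ =>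
    hN.def'.aestronglyMeasurable.mul
      (by fun_prop : Continuous fun ν : ℝ => Real.exp (-σ * ν)).aestronglyMeasurable
  have hbound : ∀ σ : ℝ, 0 ≤ σ → ∀ ν ∈ Set.uIoc 0 τ,
      ‖N ν * Real.exp (-σ * ν)‖ ≤ ‖N ν‖ := by
    intro σ hσ ν hν
    rw [Set.uIoc_of_le hτ.le] at hν
    rw [norm_mul, Real.norm_of_nonneg (Real.exp_pos _).le]
    refine mul_le_of_le_one_right (norm_nonneg _) (Real.exp_le_one_iff.2 ?_)
    nlinarith [mul_nonneg hσ hν.1.le]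
  have hcont : ContinuousOn F (Set.Ici 0) := by
    refine ContinuousOn.sub (by fun_prop) ?_
    intro σ₀ _
    refine intervalIntegral.continuousWithinAt_of_dominated_interval (bound := fun ν => ‖N ν‖)
      (Filter.Eventually.of_forall hmeas) ?_ hN.norm ?_
    · filter_upwards [self_mem_nhdsWithin] with σ hσ
      exact Filter.Eventually.of_forall (hbound σ hσ)
    · refine Filter.Eventually.of_forall fun ν _ => ?_
      exact (by fun_prop : Continuous fun σ : ℝ => N ν * Real.exp (-σ * ν)).continuousWithinAt
  have hexp : ∀ ν : ℝ, 0 < ν →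
      Filter.Tendsto (fun σ : ℝ => Real.exp (-σ * ν)) Filter.atTop (nhds 0) := by
    intro ν hν
    refine Real.tendsto_exp_atBot.comp ?_
    exact Filter.tendsto_neg_atTop_atBot.atBot_mul_const hν
  have hint : Filter.Tendsto (fun σ : ℝ => ∫ ν in (0:ℝ)..τ, N ν * Real.exp (-σ * ν))
      Filter.atTop (nhds 0) := by
    have := intervalIntegral.tendsto_integral_filter_of_dominated_convergence
      (μ := volume) (a := 0) (b := τ) (l := Filter.atTop)
      (F := fun σ ν => N ν * Real.exp (-σ * ν)) (f := fun _ => (0:ℝ))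
      (fun ν => ‖N ν‖) (Filter.Eventually.of_forall hmeas)
      (by
        filter_upwards [Filter.eventually_ge_atTop 0] with σ hσ
        exact Filter.Eventually.of_forall (hbound σ hσ))
      hN.norm
      (by
        refine Filter.Eventually.of_forall fun ν hν => ?_
        rw [Set.uIoc_of_le hτ.le] at hν
        simpa using (hexp ν hν.1).const_mul (N ν))
    simpa using this
  have hlim : Filter.Tendsto F Filter.atTop (nhds 1) := by
    simpa [hF] using (((hexp τ hτ).const_mul ξ).const_sub 1).sub hint
  obtain ⟨b, hb, hb0⟩ :=
    ((hlim.eventually_const_lt one_pos).and (Filter.eventually_ge_atTop 0)).exists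
  have hF0 : F 0 ≤ 0 := by simpa [hF] using h0
  obtain ⟨σ, hσ, hσF⟩ :=
    intermediate_value_Icc hb0 (hcont.mono Set.Icc_subset_Ici_self) ⟨hF0, hb.le⟩
  exact ⟨σ, hσ.1, hσF⟩

/-- A real zero `σ` of the characteristic function yields the solution `t ↦ e^{σt}`. -/
lemma isSolutionIDE_exp (τ ξ σ : ℝ) (N : ℝ → ℝ)
    (hσ : 1 - ξ * Real.exp (-σ * τ) - ∫ ν in (0:ℝ)..τ, N ν * Real.exp (-σ * ν) = 0) :
    IsSolutionIDE τ ξ N (fun t => Real.exp (σ * t)) := by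
  have key : ∀ t : ℝ, Real.exp (σ * t) = ξ * Real.exp (σ * (t - τ)) +
      ∫ ν in (0:ℝ)..τ, N ν * Real.exp (σ * (t - ν)) := by
    intro t
    have e : ∀ ν, Real.exp (σ * (t - ν)) = Real.exp (σ * t) * Real.exp (-σ * ν) := by
      intro ν
      rw [← Real.exp_add]
      ring_nf
    have e2 : ∀ ν, N ν * (Real.exp (σ * t) * Real.exp (-σ * ν)) =
        Real.exp (σ * t) * (N ν * Real.exp (-σ * ν)) := fun ν => by ring
    simp only [e, e2, intervalIntegral.integral_const_mul]
    linear_combination Real.exp (σ * t) * hσ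
  refine ⟨fun T => ?_, ⟨fun t => Real.exp (σ * t) * σ, ?_, ?_⟩, ?_, fun t _ => key t⟩
  · exact (by fun_prop : Continuous fun t : ℝ => Real.exp (σ * t) ^ 2).intervalIntegrable _ _
  · exact (by fun_prop : Continuous fun t : ℝ =>
      (Real.exp (σ * t) * σ) ^ 2).intervalIntegrable _ _
  · intro θ _
    have hd : ∀ x ∈ Set.uIcc (-τ) θ,
        HasDerivAt (fun t : ℝ => Real.exp (σ * t)) (Real.exp (σ * x) * σ) x := by
      intro x _
      simpa using ((hasDerivAt_id x).const_mul σ).exp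
    rw [intervalIntegral.integral_eq_sub_of_hasDerivAt hd
      ((by fun_prop : Continuous fun t : ℝ => Real.exp (σ * t) * σ).intervalIntegrable _ _)]
    ring
  · simpa using key 0

theorem stmt_1 (τ ξ : ℝ) (hτ : 0 < τ) (N : ℝ → ℝ)
    (hN : IntervalIntegrable N volume 0 τ)
    (Δ : ℂ → ℂ)
    (hΔ : ∀ s : ℂ, Δ s = 1 - (ξ : ℂ) * Complex.exp (-s * τ)
      - ∫ ν in (0:ℝ)..τ, (N ν : ℂ) * Complex.exp (-s * ν))
    (h0 : 1 - ξ - ∫ ν in (0:ℝ)..τ, N ν ≤ 0) :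
    ¬ ExpStableIDE τ ξ N := by
  rintro ⟨C, hC, η, hη, h⟩
  obtain ⟨σ, hσ0, hσ⟩ := exists_nonneg_real_root τ ξ hτ N hN h0
  have hz := h _ (isSolutionIDE_exp τ ξ σ N hσ)
  set A : ℝ := ∫ θ in (-τ)..0, Real.exp (σ * θ) ^ 2 with hA
  have hApos : 0 < A := by
    refine intervalIntegral.intervalIntegral_pos_of_pos ?_ (fun x => by positivity) (by linarith)
    exact (by fun_prop : Continuous fun t : ℝ => Real.exp (σ * t) ^ 2).intervalIntegrable _ _
  have hone : ∀ t : ℝ, 0 ≤ t → 1 ≤ C * Real.exp (-η * t) := by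
    intro t ht
    have h1 := hz t ht
    have e : ∀ θ, Real.exp (σ * (t + θ)) ^ 2 = Real.exp (σ * t) ^ 2 * Real.exp (σ * θ) ^ 2 := by
      intro θ
      rw [← mul_pow, ← Real.exp_add, mul_add]
    simp only [e, intervalIntegral.integral_const_mul] at h1
    rw [← hA, Real.sqrt_mul (by positivity), Real.sqrt_sq (Real.exp_pos _).le] at h1
    exact (Real.one_le_exp (mul_nonneg hσ0 ht)).trans
      (le_of_mul_le_mul_right h1 (Real.sqrt_pos.2 hApos))
  -- At `t = C / η` the bound reads `e^C ≤ C`, which is absurd.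
  have h2 := hone (C / η) (by positivity)
  rw [show -η * (C / η) = -C by field_simp, Real.exp_neg, ← div_eq_mul_inv,
    le_div_iff₀ (Real.exp_pos _)] at h2
  linarith [Real.add_one_le_exp C]
end

section
/- Let τ > 0, ξ ∈ ℝ with |ξ| < 1, and let N : [0,τ] → ℝ be integrable, and define Δ(s) = 1 − ξ e^{−sτ} − ∫₀^τ N(ν) e^{−sν} dν. Then for every real s₀ such that e^{s₀ τ} > |ξ| (equivalently, s₀ > (1/τ) ln|ξ| when ξ ≠ 0, and s₀ arbitrary when ξ = 0), the set {s ∈ ℂ : Re s ≥ s₀ and Δ(s) = 0} is finite. -/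
/-!
The integral term `∫₀^τ N(ν) e^{-sν} dν` tends to `0` as `‖s‖ → ∞` in the half-plane `Re s ≥ s₀`
(`exists_norm_laplace_lt`, a Riemann–Lebesgue lemma uniform on half-planes). Indeed `e^{-sν}` is
bounded by `M = e^{|s₀|τ}` there, so `N` may be replaced by an `L¹`-close smooth function, for
which integration by parts gives a bound `C / ‖s‖` (`exists_norm_mul_laplace_le`).

Since `|ξ e^{-sτ}| ≤ |ξ| e^{-s₀τ} < 1` on the half-plane, `Δ` has no zeros there outside some disc.
In particular the entire function `Δ` is not identically zero, so its zeros cannot accumulate in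
the compact set cut out of the half-plane by that disc.
-/

open MeasureTheory Complex

lemma norm_exp_neg_mul_le {τ s₀ ν : ℝ} {s : ℂ} (hs : s₀ ≤ s.re) (h0 : 0 ≤ ν) (h1 : ν ≤ τ) :
    ‖Complex.exp (-s * ν)‖ ≤ Real.exp (|s₀| * τ) := by
  rw [Complex.norm_exp]
  apply Real.exp_le_exp.2
  have h2 : (-s * (ν : ℂ)).re = -(s.re * ν) := by simp
  rw [h2]
  have h3 := neg_abs_le s₀
  nlinarith [abs_nonneg s₀]

lemma intervalIntegrable_mul_exp {τ : ℝ} {f : ℝ → ℝ} (hf : IntervalIntegrable f volume 0 τ)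
    (s : ℂ) : IntervalIntegrable (fun ν : ℝ => (f ν : ℂ) * Complex.exp (-s * ν)) volume 0 τ := by
  have h : IntervalIntegrable (fun ν : ℝ => (f ν : ℂ)) volume 0 τ :=
    ⟨hf.1.ofReal, hf.2.ofReal⟩
  exact h.mul_continuousOn (by fun_prop)

lemma norm_laplace_le {τ s₀ : ℝ} (hτ : 0 < τ) {f : ℝ → ℝ}
    (hf : IntervalIntegrable f volume 0 τ) {s : ℂ} (hs : s₀ ≤ s.re) :
    ‖∫ ν in (0:ℝ)..τ, (f ν : ℂ) * Complex.exp (-s * ν)‖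
      ≤ Real.exp (|s₀| * τ) * ∫ ν in (0:ℝ)..τ, |f ν| := by
  rw [← intervalIntegral.integral_const_mul]
  refine intervalIntegral.norm_integral_le_of_norm_le hτ.le
    (Filter.Eventually.of_forall fun ν hν => ?_) (hf.abs.const_mul _)
  rw [norm_mul, Complex.norm_real, Real.norm_eq_abs, mul_comm]
  exact mul_le_mul_of_nonneg_right (norm_exp_neg_mul_le hs hν.1.le hν.2) (abs_nonneg _)

lemma exists_norm_mul_laplace_le {τ : ℝ} (s₀ : ℝ) (hτ : 0 < τ) {g : ℝ → ℝ} (hg : ContDiff ℝ 1 g) :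
    ∃ C : ℝ, ∀ s : ℂ, s₀ ≤ s.re →
      ‖s‖ * ‖∫ ν in (0:ℝ)..τ, (g ν : ℂ) * Complex.exp (-s * ν)‖ ≤ C := by
  refine ⟨|g τ| * Real.exp (|s₀| * τ) + |g 0|
    + Real.exp (|s₀| * τ) * ∫ ν in (0:ℝ)..τ, |deriv g ν|, fun s hs => ?_⟩
  have hg' : Continuous (deriv g) := hg.continuous_deriv le_rfl
  have hparts := intervalIntegral.integral_mul_deriv_eq_deriv_mul (a := 0) (b := τ)
    (u := fun ν : ℝ => (g ν : ℂ)) (u' := fun ν : ℝ => ((deriv g ν : ℝ) : ℂ))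
    (v := fun ν : ℝ => Complex.exp (-s * ν)) (v' := fun ν : ℝ => Complex.exp (-s * ν) * (-s))
    (fun x _ => ((hg.differentiable one_ne_zero) x).hasDerivAt.ofReal_comp)
    (fun x _ => by
      have h : HasDerivAt (fun ν : ℝ => -s * (ν : ℂ)) (-s) x := by
        simpa using (Complex.ofRealCLM.hasDerivAt (x := x)).const_mul (-s)
      exact h.cexp)
    (by apply Continuous.intervalIntegrable; fun_prop)
    (by apply Continuous.intervalIntegrable; fun_prop)
  have hlhs : (∫ ν in (0:ℝ)..τ, (g ν : ℂ) * (Complex.exp (-s * ν) * (-s)))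
      = (∫ ν in (0:ℝ)..τ, (g ν : ℂ) * Complex.exp (-s * ν)) * (-s) := by
    rw [← intervalIntegral.integral_mul_const]
    simp only [mul_assoc]
  rw [hlhs] at hparts
  rw [mul_comm, ← norm_neg s, ← norm_mul, hparts]
  refine (norm_sub_le _ _).trans (add_le_add ((norm_sub_le _ _).trans (add_le_add ?_ ?_)) ?_)
  · rw [norm_mul, Complex.norm_real, Real.norm_eq_abs]
    exact mul_le_mul_of_nonneg_left (norm_exp_neg_mul_le hs hτ.le le_rfl) (abs_nonneg _)
  · simp
  · exact norm_laplace_le hτ (hg'.intervalIntegrable _ _) hs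

/-- Riemann–Lebesgue lemma for the finite Laplace transform, uniform on a right half-plane. -/
lemma exists_norm_laplace_lt {τ : ℝ} (s₀ : ℝ) (hτ : 0 < τ) {N : ℝ → ℝ}
    (hN : IntervalIntegrable N volume 0 τ) {ε : ℝ} (hε : 0 < ε) :
    ∃ R : ℝ, ∀ s : ℂ, s₀ ≤ s.re → R < ‖s‖ →
      ‖∫ ν in (0:ℝ)..τ, (N ν : ℂ) * Complex.exp (-s * ν)‖ < ε := by
  set M := Real.exp (|s₀| * τ) with hM
  have hMpos : 0 < M := Real.exp_pos _
  have hδ : 0 < ε / 2 / M := by positivity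
  have hNi : Integrable N (volume.restrict (Set.Ioc 0 τ)) := hN.1
  obtain ⟨g, -, hgs, hgN⟩ := (memLp_one_iff_integrable.2 hNi).exist_eLpNorm_sub_le
    ENNReal.one_ne_top le_rfl hδ
  have hg : IntervalIntegrable g volume 0 τ := hgs.continuous.intervalIntegrable _ _
  have hdiff : ∫ ν in (0:ℝ)..τ, |N ν - g ν| ≤ ε / 2 / M := by
    rw [intervalIntegral.integral_of_le hτ.le]
    have h := integral_norm_eq_lintegral_enorm (hNi.sub hg.1).aestronglyMeasurable
    rw [← eLpNorm_one_eq_lintegral_enorm] at h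
    simp only [Pi.sub_apply, Real.norm_eq_abs] at h
    rw [h]
    exact ENNReal.toReal_le_of_le_ofReal hδ.le hgN
  obtain ⟨C, hC⟩ := exists_norm_mul_laplace_le s₀ hτ (g := g) (hgs.of_le (by exact_mod_cast le_top))
  refine ⟨max 0 (C / (ε / 2)), fun s hs hR => ?_⟩
  have hs0 : 0 < ‖s‖ := (le_max_left _ _).trans_lt hR
  have hsC : C < ‖s‖ * (ε / 2) :=
    (div_lt_iff₀ (by positivity)).1 ((le_max_right _ _).trans_lt hR)
  have h1 : ‖∫ ν in (0:ℝ)..τ, (g ν : ℂ) * Complex.exp (-s * ν)‖ < ε / 2 :=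
    lt_of_mul_lt_mul_left ((hC s hs).trans_lt hsC) hs0.le
  have h2 : ‖∫ ν in (0:ℝ)..τ, ((N ν - g ν : ℝ) : ℂ) * Complex.exp (-s * ν)‖ ≤ ε / 2 := by
    refine (norm_laplace_le hτ (hN.sub hg) hs).trans ?_
    calc M * ∫ ν in (0:ℝ)..τ, |N ν - g ν| ≤ M * (ε / 2 / M) := by gcongr
      _ = ε / 2 := by field_simp
  have h3 : (∫ ν in (0:ℝ)..τ, (N ν : ℂ) * Complex.exp (-s * ν))
      = (∫ ν in (0:ℝ)..τ, ((N ν - g ν : ℝ) : ℂ) * Complex.exp (-s * ν))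
        + ∫ ν in (0:ℝ)..τ, (g ν : ℂ) * Complex.exp (-s * ν) := by
    rw [← intervalIntegral.integral_add (intervalIntegrable_mul_exp (hN.sub hg) s)
      (intervalIntegrable_mul_exp hg s)]
    congr 1
    ext ν
    push_cast
    ring
  rw [h3]
  linarith [norm_add_le (∫ ν in (0:ℝ)..τ, ((N ν - g ν : ℝ) : ℂ) * Complex.exp (-s * ν))
    (∫ ν in (0:ℝ)..τ, (g ν : ℂ) * Complex.exp (-s * ν))]

lemma differentiable_laplace {τ : ℝ} (hτ : 0 < τ) {N : ℝ → ℝ}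
    (hN : IntervalIntegrable N volume 0 τ) :
    Differentiable ℂ fun s : ℂ => ∫ ν in (0:ℝ)..τ, (N ν : ℂ) * Complex.exp (-s * ν) := by
  intro s₁
  have hNν : IntervalIntegrable (fun ν => N ν * -ν) volume 0 τ :=
    hN.mul_continuousOn (by fun_prop)
  have key := intervalIntegral.hasDerivAt_integral_of_dominated_loc_of_deriv_le
    (μ := volume) (a := 0) (b := τ) (x₀ := s₁) (s := {s : ℂ | s₁.re - 1 < s.re})
    (F := fun s ν => (N ν : ℂ) * Complex.exp (-s * ν))
    (F' := fun s ν => ((N ν * -ν : ℝ) : ℂ) * Complex.exp (-s * ν))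
    (bound := fun ν => |N ν * -ν| * Real.exp (|s₁.re - 1| * τ))
    ((isOpen_lt continuous_const Complex.continuous_re).mem_nhds (by simp))
    (Filter.Eventually.of_forall fun s =>
      (intervalIntegrable_iff.1 (intervalIntegrable_mul_exp hN s)).aestronglyMeasurable)
    (intervalIntegrable_mul_exp hN s₁)
    (intervalIntegrable_iff.1 (intervalIntegrable_mul_exp hNν s₁)).aestronglyMeasurable
    (Filter.Eventually.of_forall fun ν hν s hs => by
      rw [Set.uIoc_of_le hτ.le] at hν
      rw [norm_mul, Complex.norm_real, Real.norm_eq_abs]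
      exact mul_le_mul_of_nonneg_left
        (norm_exp_neg_mul_le (le_of_lt hs) hν.1.le hν.2) (abs_nonneg _))
    (hNν.abs.mul_const _)
    (Filter.Eventually.of_forall fun ν _ s _ => by
      have h : HasDerivAt (fun s : ℂ => -s * (ν : ℂ)) (-ν) s := by
        simpa using (hasDerivAt_id s).neg.mul_const (ν : ℂ)
      refine (h.cexp.const_mul (N ν : ℂ)).congr_deriv ?_
      push_cast
      ring)
  exact key.2.differentiableAt

theorem stmt_2 (τ ξ : ℝ) (hτ : 0 < τ) (hξ : |ξ| < 1) (N : ℝ → ℝ)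
    (hN : IntervalIntegrable N volume 0 τ)
    (Δ : ℂ → ℂ)
    (hΔ : ∀ s : ℂ, Δ s = 1 - (ξ : ℂ) * Complex.exp (-s * τ)
      - ∫ ν in (0:ℝ)..τ, (N ν : ℂ) * Complex.exp (-s * ν)) :
    ∀ s₀ : ℝ, |ξ| < Real.exp (s₀ * τ) →
      {s : ℂ | s₀ ≤ s.re ∧ Δ s = 0}.Finite := by
  intro s₀ hs₀
  have hgap : 0 < 1 - |ξ| * Real.exp (-(s₀ * τ)) := by
    rw [Real.exp_neg, ← div_eq_mul_inv, sub_pos, div_lt_one (Real.exp_pos _)]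
    exact hs₀
  obtain ⟨R, hR⟩ := exists_norm_laplace_lt s₀ hτ hN hgap
  have hne : ∀ s : ℂ, s₀ ≤ s.re → R < ‖s‖ → Δ s ≠ 0 := by
    intro s hs hRs h0
    have h1 := hR s hs hRs
    have h2 : ‖(ξ : ℂ) * Complex.exp (-s * τ)‖ ≤ |ξ| * Real.exp (-(s₀ * τ)) := by
      rw [norm_mul, Complex.norm_real, Real.norm_eq_abs, Complex.norm_exp]
      refine mul_le_mul_of_nonneg_left (Real.exp_le_exp.2 ?_) (abs_nonneg _)
      have h3 : (-s * (τ : ℂ)).re = -(s.re * τ) := by simp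
      rw [h3]
      nlinarith
    rw [hΔ, sub_sub, sub_eq_zero] at h0
    have h4 := norm_add_le ((ξ : ℂ) * Complex.exp (-s * τ))
      (∫ ν in (0:ℝ)..τ, (N ν : ℂ) * Complex.exp (-s * ν))
    rw [← h0, norm_one] at h4
    linarith
  have hdiff : Differentiable ℂ Δ := by
    rw [funext hΔ]
    exact Differentiable.sub (by fun_prop) (differentiable_laplace hτ hN)
  have han : AnalyticOnNhd ℂ Δ Set.univ := fun z _ => hdiff.analyticAt z
  by_contra hinf
  obtain ⟨z, -, hz⟩ := Set.Infinite.exists_accPt_of_subset_isCompact hinf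
    (isCompact_closedBall (0 : ℂ) R) (fun s hs => by
      rw [mem_closedBall_zero_iff]
      by_contra! h
      exact hne s hs.1 h hs.2)
  have hzero := han.eqOn_zero_of_preconnected_of_frequently_eq_zero isPreconnected_univ
    (Set.mem_univ z) ((accPt_iff_frequently_nhdsNE.1 hz).mono fun s hs => hs.2)
  -- A point of the half-plane outside the disc of radius `R`, where `Δ` cannot vanish.
  refine hne ((|s₀| + |R| + 1 : ℝ) : ℂ) ?_ ?_ (hzero (Set.mem_univ _))
  · rw [Complex.ofReal_re]
    linarith [le_abs_self s₀, abs_nonneg R]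
  · rw [Complex.norm_real, Real.norm_eq_abs]
    refine lt_of_lt_of_le ?_ (le_abs_self _)
    linarith [le_abs_self R, abs_nonneg s₀]
end

section
/- Let τ > 0, ξ ∈ ℝ with |ξ| < 1, and let N : [0,τ] → ℝ be integrable, and define Δ(s) = 1 − ξ e^{−sτ} − ∫₀^τ N(ν) e^{−sν} dν and M(ω) = Re(Δ(iω)) for ω ∈ ℝ. Then the set {ω ∈ ℝ : ω > 0 and M(ω) = 0} of positive zeros of M is finite. -/
open MeasureTheory Complex

/-!
Since `M ω = 1 - ξ cos (ωτ) - Re ∫₀^τ N(ν) e^{-iων} dν`, the Riemann–Lebesgue lemma and `|ξ| < 1`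
give `M ω > 0` for all large `ω`, so the positive zeros of `M` lie in a compact interval. The
integral term is an entire function of `s` (differentiation under the integral sign), so `M` is
real analytic on `ℝ`. Infinitely many zeros would accumulate at some point of the interval, and the
identity principle would make `M` vanish identically, contradicting positivity at infinity.
-/

/-- The Laplace transform of an integrable function on a bounded interval is entire. -/
lemma differentiable_finite_laplace {τ : ℝ} (hτ : 0 < τ) {N : ℝ → ℝ}
    (hN : IntervalIntegrable N volume 0 τ) :
    Differentiable ℂ
      (fun s : ℂ => ∫ ν in (0:ℝ)..τ, (N ν : ℂ) * Complex.exp (-s * ν)) := by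
  intro s₀
  have hNc : IntervalIntegrable (fun ν => (N ν : ℂ)) volume 0 τ :=
    ⟨hN.1.ofReal, hN.2.ofReal⟩
  have hFint : ∀ s : ℂ, IntervalIntegrable
      (fun ν : ℝ => (N ν : ℂ) * Complex.exp (-s * ν)) volume 0 τ := fun s =>
    hNc.mul_continuousOn (by fun_prop)
  have hFint' : IntervalIntegrable
      (fun ν : ℝ => (N ν : ℂ) * (Complex.exp (-s₀ * ν) * (-ν))) volume 0 τ :=
    hNc.mul_continuousOn (by fun_prop)
  refine (intervalIntegral.hasDerivAt_integral_of_dominated_loc_of_deriv_le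
    (F := fun (s : ℂ) (ν : ℝ) => (N ν : ℂ) * Complex.exp (-s * ν))
    (F' := fun (s : ℂ) (ν : ℝ) => (N ν : ℂ) * (Complex.exp (-s * ν) * (-ν)))
    (bound := fun ν => |N ν| * (Real.exp ((‖s₀‖ + 1) * τ) * τ))
    (Metric.ball_mem_nhds s₀ one_pos)
    (Filter.Eventually.of_forall fun s => (hFint s).def'.aestronglyMeasurable)
    (hFint s₀) hFint'.def'.aestronglyMeasurable
    (Filter.Eventually.of_forall ?_) (hN.abs.mul_const _)
    (Filter.Eventually.of_forall ?_)).2.differentiableAt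
  · intro t ht s hs
    rw [Set.uIoc_of_le hτ.le] at ht
    have hs' : ‖s‖ ≤ ‖s₀‖ + 1 := by
      have h1 : ‖s - s₀‖ < 1 := by simpa [dist_eq_norm] using hs
      have h2 := norm_le_norm_add_norm_sub s₀ s
      linarith [norm_sub_rev s s₀]
    have hre : (-s * (t : ℂ)).re ≤ (‖s₀‖ + 1) * τ := by
      calc (-s * (t : ℂ)).re ≤ ‖-s * (t : ℂ)‖ := Complex.re_le_norm _
        _ = ‖s‖ * t := by
          rw [norm_mul, norm_neg, Complex.norm_real, Real.norm_of_nonneg ht.1.le]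
        _ ≤ (‖s₀‖ + 1) * τ := mul_le_mul hs' ht.2 ht.1.le (by positivity)
    rw [norm_mul, norm_mul, norm_neg, Complex.norm_real, Complex.norm_real, Complex.norm_exp,
      Real.norm_of_nonneg ht.1.le, Real.norm_eq_abs]
    exact mul_le_mul_of_nonneg_left
      (mul_le_mul (Real.exp_le_exp.2 hre) ht.2 ht.1.le (by positivity)) (abs_nonneg _)
  · intro t _ s _
    have h : HasDerivAt (fun s : ℂ => -s * (t : ℂ)) (-(t : ℂ)) s := by
      simpa using (hasDerivAt_id s).neg.mul_const (t : ℂ)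
    exact h.cexp.const_mul _

/-- The Riemann–Lebesgue lemma on `[0, τ]`, with the frequency normalized without `2π`. -/
lemma tendsto_finite_laplace_imag {τ : ℝ} (hτ : 0 < τ) (N : ℝ → ℝ) :
    Filter.Tendsto
      (fun ω : ℝ => ∫ ν in (0:ℝ)..τ, (N ν : ℂ) * Complex.exp (-(Complex.I * ω) * ν))
      Filter.atTop (nhds 0) := by
  have h := (Real.tendsto_integral_exp_smul_cocompact
    ((Set.Ioc 0 τ).indicator fun ν => (N ν : ℂ))).mono_left atTop_le_cocompact
  have h2 : Filter.Tendsto (fun ω : ℝ => ω / (2 * Real.pi)) Filter.atTop Filter.atTop :=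
    Filter.tendsto_id.atTop_div_const (by positivity)
  refine (h.comp h2).congr fun ω => ?_
  rw [intervalIntegral.integral_of_le hτ.le, ← integral_indicator measurableSet_Ioc]
  refine integral_congr_ae (Filter.Eventually.of_forall fun v => ?_)
  by_cases hv : v ∈ Set.Ioc 0 τ
  · simp only [Set.indicator_of_mem hv]
    rw [Circle.smul_def, Real.fourierChar_apply, smul_eq_mul, mul_comm]
    have hpi : (Real.pi : ℂ) ≠ 0 := by exact_mod_cast Real.pi_ne_zero
    congr 2
    push_cast
    field_simp
  · simp [Set.indicator_of_notMem hv]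

theorem stmt_4 (τ ξ : ℝ) (hτ : 0 < τ) (hξ : |ξ| < 1) (N : ℝ → ℝ)
    (hN : IntervalIntegrable N volume 0 τ)
    (Δ : ℂ → ℂ)
    (hΔ : ∀ s : ℂ, Δ s = 1 - (ξ : ℂ) * Complex.exp (-s * τ)
      - ∫ ν in (0:ℝ)..τ, (N ν : ℂ) * Complex.exp (-s * ν))
    (M : ℝ → ℝ) (hM : ∀ ω : ℝ, M ω = (Δ (Complex.I * ω)).re) :
    {ω : ℝ | 0 < ω ∧ M ω = 0}.Finite := by
  have hΔd : Differentiable ℂ Δ := by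
    rw [funext hΔ]
    exact Differentiable.sub (by fun_prop) (differentiable_finite_laplace hτ hN)
  have hMa : AnalyticOnNhd ℝ M Set.univ := by
    intro x _
    rw [funext hM]
    have hd : Differentiable ℂ (fun z : ℂ => Δ (Complex.I * z)) :=
      hΔd.comp (differentiable_id.const_mul _)
    exact (hd.analyticAt (x : ℂ)).re_ofReal
  have hev : ∀ᶠ ω in Filter.atTop, 0 < M ω := by
    have hsmall := (tendsto_finite_laplace_imag hτ N).norm.eventually_lt_const
      (u := 1 - |ξ|) (by simpa using hξ)
    filter_upwards [hsmall] with ω hω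
    rw [hM, hΔ, Complex.sub_re, Complex.sub_re, Complex.one_re]
    have h1 : ((ξ : ℂ) * Complex.exp (-(Complex.I * ω) * τ)).re ≤ |ξ| := by
      refine (Complex.re_le_norm _).trans ?_
      rw [norm_mul, Complex.norm_real, Complex.norm_exp]
      simp
    have h2 := Complex.re_le_norm
      (∫ ν in (0:ℝ)..τ, (N ν : ℂ) * Complex.exp (-(Complex.I * ω) * ν))
    linarith
  obtain ⟨R, hR⟩ := Filter.eventually_atTop.1 hev
  by_contra hinf
  have hsub : {ω : ℝ | 0 < ω ∧ M ω = 0} ⊆ Set.Icc 0 R := by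
    rintro ω ⟨h0, hz⟩
    refine ⟨h0.le, ?_⟩
    by_contra! hlt
    exact (hR ω hlt.le).ne' hz
  obtain ⟨x, -, hx⟩ := Set.Infinite.exists_accPt_of_subset_isCompact hinf isCompact_Icc hsub
  have hzero := hMa.eqOn_zero_of_preconnected_of_frequently_eq_zero isPreconnected_univ
    (Set.mem_univ x) ((accPt_iff_frequently_nhdsNE.1 hx).mono fun _ hy => hy.2)
  exact (hR R le_rfl).ne' (hzero (Set.mem_univ R))
end
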